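/- Suppose L is a metric flag labeled triangulation of the 2-sphere. If S and T are two distinct infinite, maximal RA-suspensions in L, then no 2-simplex of L is contained in both S and T. -/

import Mathlib

open Geometry

/-- The ambient space for our simplicial complexes. -/
abbrev E3 : Type := EuclideanSpace ℝ (Fin 3)

noncomputable instance : DecidableEq E3 := Classical.decEq _

namespace CoxOrb

variable (L : SimplicialComplex ℝ E3) (m : E3 → E3 → ℕ)

/-- `L` is a labeled triangulation of the 2-sphere with edge labeling `m`:
`L` is finite, its underlying space is homeomorphic to the 2-sphere, and `m`
is symmetric with `m s t ≥ 2` on every edge `{s, t}` of `L`. -/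
structure IsLabeledS2 : Prop where
  finite : L.faces.Finite
  sphere : Nonempty (L.space ≃ₜ (Metric.sphere (0 : E3) 1 : Set E3))
  symm : ∀ s t : E3, m s t = m t s
  two_le : ∀ s t : E3, s ≠ t → ({s, t} : Finset E3) ∈ L.faces → 2 ≤ m s t

/-- `L` with labeling `m` is metric flag: three pairwise-joined vertices span a
2-simplex iff the corresponding angle sum `π/m_st + π/m_tu + π/m_us` exceeds `π`. -/
def MetricFlag : Prop :=
  ∀ s t u : E3, s ≠ t → t ≠ u → s ≠ u →
    ({s, t} : Finset E3) ∈ L.faces → ({t, u} : Finset E3) ∈ L.faces →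
    ({s, u} : Finset E3) ∈ L.faces →
    (({s, t, u} : Finset E3) ∈ L.faces ↔
      1 / (m s t : ℝ) + 1 / (m t u : ℝ) + 1 / (m u s : ℝ) > 1)

/-- The link of a vertex `s`, as a set of faces of `L`. -/
def link (s : E3) : Set (Finset E3) :=
  {F | F ∈ L.faces ∧ s ∉ F ∧ insert s F ∈ L.faces}

/-- The closed star of a vertex `s`: all faces of `L` contained in some face
containing `s`. -/
def star (s : E3) : Set (Finset E3) :=
  {F | F ∈ L.faces ∧ ∃ G ∈ L.faces, s ∈ G ∧ F ⊆ G}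

/-- The vertices of the link of `s`. -/
def linkVerts (s : E3) : Set E3 :=
  {v | v ≠ s ∧ ({s, v} : Finset E3) ∈ L.faces}

/-- A set of faces `A` is a full subcomplex of `L`: every face of `L` all of
whose vertices are vertices of `A` belongs to `A`. -/
def IsFullSubcomplex (A : Set (Finset E3)) : Prop :=
  A ⊆ L.faces ∧ ∀ F ∈ L.faces, (∀ v ∈ F, ({v} : Finset E3) ∈ A) → F ∈ A

/-- `s` is a 3-Euclidean vertex of `L`: it has valence three and the labels on
the three edges of its link have reciprocals summing to one. -/
def IsThreeEuclidean (s : E3) : Prop :=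
  ({s} : Finset E3) ∈ L.faces ∧
  ∃ s₀ s₁ s₂ : E3, s₀ ≠ s₁ ∧ s₁ ≠ s₂ ∧ s₀ ≠ s₂ ∧
    linkVerts L s = {s₀, s₁, s₂} ∧
    1 / (m s₀ s₁ : ℝ) + 1 / (m s₁ s₂ : ℝ) + 1 / (m s₂ s₀ : ℝ) = 1

/-- `s` is a 4-Euclidean vertex of `L`: it has valence four, its link is the
4-circuit on `v 0, v 1, v 2, v 3` (in cyclic order), and the labels on the
edges of the link are all `2`. -/
def IsFourEuclidean (s : E3) : Prop :=
  ({s} : Finset E3) ∈ L.faces ∧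
  ∃ v : Fin 4 → E3, Function.Injective v ∧
    linkVerts L s = {v 0, v 1, v 2, v 3} ∧
    (∀ i : Fin 4, ({s, v i, v (i + 1)} : Finset E3) ∈ L.faces) ∧
    (∀ i : Fin 4, m (v i) (v (i + 1)) = 2)

/-- `L` is the boundary complex of a 3-simplex: four pairwise-joined vertices
spanning four 2-simplices. -/
def IsBoundaryOfThreeSimplex : Prop :=
  ∃ a b c d : E3, a ≠ b ∧ a ≠ c ∧ a ≠ d ∧ b ≠ c ∧ b ≠ d ∧ c ≠ d ∧
    (∀ v : E3, ({v} : Finset E3) ∈ L.faces ↔ v = a ∨ v = b ∨ v = c ∨ v = d) ∧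
    ({a, b, c} : Finset E3) ∈ L.faces ∧ ({a, b, d} : Finset E3) ∈ L.faces ∧
    ({a, c, d} : Finset E3) ∈ L.faces ∧ ({b, c, d} : Finset E3) ∈ L.faces

/-- `L` is the suspension of a 3-gon. -/
def IsSuspensionOfThreeGon : Prop :=
  ∃ t t' s₀ s₁ s₂ : E3, [t, t', s₀, s₁, s₂].Pairwise (· ≠ ·) ∧
    (∀ v : E3, ({v} : Finset E3) ∈ L.faces ↔ v = t ∨ v = t' ∨ v = s₀ ∨ v = s₁ ∨ v = s₂) ∧
    ({s₀, s₁} : Finset E3) ∈ L.faces ∧ ({s₁, s₂} : Finset E3) ∈ L.faces ∧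
    ({s₀, s₂} : Finset E3) ∈ L.faces ∧
    ({t, s₀} : Finset E3) ∈ L.faces ∧ ({t, s₁} : Finset E3) ∈ L.faces ∧
    ({t, s₂} : Finset E3) ∈ L.faces ∧
    ({t', s₀} : Finset E3) ∈ L.faces ∧ ({t', s₁} : Finset E3) ∈ L.faces ∧
    ({t', s₂} : Finset E3) ∈ L.faces ∧
    ({t, t'} : Finset E3) ∉ L.faces

/-- The simplicial join of the subcomplex `Z` with the two points `t, t'`. -/
def joinSusp (Z : Set (Finset E3)) (t t' : E3) : Set (Finset E3) :=
  Z ∪ {{t}, {t'}} ∪ ((fun F => insert t F) '' Z) ∪ ((fun F => insert t' F) '' Z)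

/-- `T` is the right-angled suspension in `L` of the subcomplex `Z` with
suspension points `t, t'` (not joined by an edge of `T`): every edge from a
suspension point to a vertex of `Z` is labeled `2`. -/
structure IsRASuspData (T Z : Set (Finset E3)) (t t' : E3) : Prop where
  subset : T ⊆ L.faces
  zsubset : Z ⊆ L.faces
  zdown : ∀ F ∈ Z, ∀ G : Finset E3, G ⊆ F → G.Nonempty → G ∈ Z
  znonempty : Z.Nonempty
  tne : t ≠ t'
  t_notin : ∀ F ∈ Z, t ∉ F
  t'_notin : ∀ F ∈ Z, t' ∉ F
  labels : ∀ v : E3, ({v} : Finset E3) ∈ Z → m t v = 2 ∧ m t' v = 2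
  eq : T = joinSusp Z t t'

/-- `T` is a right-angled suspension in `L`. -/
def IsRASusp (T : Set (Finset E3)) : Prop :=
  ∃ Z t t', IsRASuspData L m T Z t t'

/-- The base `Z` of the suspension is neither a single vertex nor a single
edge, so that the suspension is infinite. -/
def InfiniteBase (Z : Set (Finset E3)) : Prop :=
  (¬ ∃ v : E3, Z = {({v} : Finset E3)}) ∧
  (¬ ∃ u v : E3, u ≠ v ∧ Z = {({u} : Finset E3), ({v} : Finset E3), ({u, v} : Finset E3)})

/-- `T` is an infinite, maximal right-angled suspension in `L`: it is an
RA-suspension of a full subcomplex which is neither a vertex nor an edge, and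
`T` is not properly contained in another RA-suspension. -/
def IsInfMaxRASusp (T : Set (Finset E3)) : Prop :=
  (∃ Z t t', IsRASuspData L m T Z t t' ∧ InfiniteBase Z ∧ IsFullSubcomplex L Z) ∧
  ∀ T', IsRASusp L m T' → T ⊆ T' → T = T'

/-- `v 0, v 1, v 2, v 3` (in cyclic order) form a Euclidean 4-circuit of `L`:
all four edge labels are `2` and the circuit is not the boundary of the union
of two 2-simplices of `L` sharing an edge. -/
def IsEuclidean4Circuit (v : Fin 4 → E3) : Prop :=
  Function.Injective v ∧
  (∀ i : Fin 4, ({v i, v (i + 1)} : Finset E3) ∈ L.faces) ∧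
  (∀ i : Fin 4, m (v i) (v (i + 1)) = 2) ∧
  ¬ ((({v 0, v 1, v 2} : Finset E3) ∈ L.faces ∧ ({v 0, v 2, v 3} : Finset E3) ∈ L.faces) ∨
     (({v 1, v 2, v 3} : Finset E3) ∈ L.faces ∧ ({v 0, v 1, v 3} : Finset E3) ∈ L.faces))

/-- The subcomplex consisting of the vertices and edges of the 4-circuit `v`. -/
def circuitComplex (v : Fin 4 → E3) : Set (Finset E3) :=
  {F | (∃ i : Fin 4, F = {v i}) ∨ (∃ i : Fin 4, F = {v i, v (i + 1)})}

/-- `T` is the right-angled cone on a Euclidean 4-circuit: the closed star of a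
vertex `c` of valence four whose link is a Euclidean 4-circuit, all four edges
containing `c` being labeled `2`. -/
def IsRAConeOn4Circuit (T : Set (Finset E3)) : Prop :=
  ∃ (c : E3) (v : Fin 4 → E3), IsEuclidean4Circuit L m v ∧
    linkVerts L c = {v 0, v 1, v 2, v 3} ∧
    (∀ i : Fin 4, ({c, v i, v (i + 1)} : Finset E3) ∈ L.faces) ∧
    (∀ i : Fin 4, m c (v i) = 2) ∧
    T = star L c

/-- The generating relation for Seifert subcomplexes: two infinite, maximal
RA-suspensions whose intersection is a Euclidean 4-circuit. -/
def SeifertRel (S S' : Set (Finset E3)) : Prop :=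
  IsInfMaxRASusp L m S ∧ IsInfMaxRASusp L m S' ∧
  ∃ v : Fin 4 → E3, IsEuclidean4Circuit L m v ∧ S ∩ S' = circuitComplex v

/-- `D` is a Seifert subcomplex of `L`: the union of the members of an
equivalence class of infinite, maximal RA-suspensions under the equivalence
relation generated by `SeifertRel`. -/
def IsSeifertSubcomplex (D : Set (Finset E3)) : Prop :=
  ∃ S₀, IsInfMaxRASusp L m S₀ ∧
    D = ⋃₀ {S | IsInfMaxRASusp L m S ∧ Relation.EqvGen (SeifertRel L m) S₀ S}

end CoxOrb

open CoxOrb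

/-!
Both RA-suspensions see a common 2-simplex as a suspension point joined to an edge of the base.
Drawing `K₃,₃` in the sphere rules out three triangles on one edge, hence a common suspension point
with different opposite points. Otherwise the simplex is `{t, a, b}` with `t` a suspension point of
`S = Z ∗ {t, t'}` and `a` one of `T = W ∗ {a, a'}`. If `c ∈ Z` and `d ∈ W` are further vertices of
the bases, the paths from `t`, `a`, `b` to `t'` (the first one through `c`) and to `a'` (the second
one through `d`), together with a point inside the simplex, draw another `K₃,₃`, unless `c = a'`,
`d = t'` or `c = d`. If `a' ∈ Z` or `t' ∈ W`, comparing vertices and using fullness gives `S = T`;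
otherwise the vertices of `Z` are `a, b, e` and those of `W` are `t, b, e` for a single `e`, and by
maximality both `S` and `T` are the largest RA-suspension with suspension points `b` and `e`.
-/

namespace CoxOrb

theorem injective_vecCons_three {α : Type*} {a b c : α} (hab : a ≠ b) (hac : a ≠ c) (hbc : b ≠ c) :
    Function.Injective ![a, b, c] := by
  simp [Function.Injective, Fin.forall_fin_succ, *, Ne.symm]

theorem eq_and_eq_of_union_eq_union {α : Type*} [DecidableEq α] {P Q P' Q' : Finset α}
    (h : P ∪ Q = P' ∪ Q') (hPQ' : Disjoint P Q') (hP'Q : Disjoint P' Q) : P = P' ∧ Q = Q' := by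
  simp only [Finset.disjoint_left] at hPQ' hP'Q
  simp only [Finset.ext_iff, Finset.mem_union] at h ⊢
  grind

theorem eq_sdiff_pair_or_insert {α : Type*} [DecidableEq α] {F : Finset α} {p q : α}
    (h : ¬ (p ∈ F ∧ q ∈ F)) :
    F = F \ {p, q} ∨ F = insert p (F \ {p, q}) ∨ F = insert q (F \ {p, q}) := by
  simp only [Finset.ext_iff]
  grind

theorem exists_eq_pair_of_insert_eq_insert {α : Type*} [DecidableEq α] {t u : α} {G H : Finset α}
    (htu : t ≠ u) (hu : u ∉ H) (hG : G.card = 2) (h : insert t G = insert u H) :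
    ∃ b, G = {u, b} ∧ H = {t, b} := by
  have u_mem : u ∈ G := by
    simpa [htu.symm] using h.symm.subset (Finset.mem_insert_self u H)
  obtain ⟨b, hb⟩ := Finset.card_eq_one.1 (show (G.erase u).card = 1 by simp [u_mem, hG])
  refine ⟨b, by rw [← hb, Finset.insert_erase u_mem], ?_⟩
  rw [← Finset.erase_insert hu, ← h, Finset.erase_insert_of_ne htu, hb]

/-! ### The complete bipartite graph `K₃,₃` is not planar -/

section Nonplanarity

theorem exists_continuous_log {X : Type*} [TopologicalSpace X] [SimplyConnectedSpace X]
    [LocallyPathConnectedSpace X] {g : X → ℂ} (hg : Continuous g) (h0 : ∀ x, g x ≠ 0) :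
    ∃ h : X → ℂ, Continuous h ∧ ∀ x, Complex.exp (h x) = g x := by
  obtain ⟨x₀⟩ := (inferInstance : Nonempty X)
  obtain ⟨h, ⟨-, hexp⟩, -⟩ := Complex.isCoveringMapOn_exp.existsUnique_continuousMap_lifts
    ⟨g, hg⟩ (a₀ := x₀) (Complex.exp_log (h0 x₀)) (fun x => by simpa using h0 x)
  exact ⟨h, h.continuous, congrFun hexp⟩

/-- The change along the path `γ` of a continuous branch of `log (· - z)`. It is meaningful only
when `γ` avoids `z`; otherwise no branch exists and the value is arbitrary. -/
noncomputable def logChange {a b : ℂ} (γ : Path a b) (z : ℂ) : ℂ :=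
  let h := Classical.epsilon fun h : ℝ → ℂ =>
    Continuous h ∧ ∀ s, Complex.exp (h s) = γ.extend s - z
  h 1 - h 0

variable {a a' b b' z : ℂ}

theorem logChange_eq (γ : Path a b) {h : ℝ → ℂ} (hh : Continuous h) {c : ℂ} (hc : c ≠ 0)
    (hexp : ∀ s, Complex.exp (h s) = c * (γ.extend s - z)) : logChange γ z = h 1 - h 0 := by
  obtain ⟨k_cont, k_exp⟩ := Classical.epsilon_spec
    (p := fun k : ℝ → ℂ => Continuous k ∧ ∀ s, Complex.exp (k s) = γ.extend s - z)
    ⟨fun s => h s - Complex.log c, by fun_prop, fun s => by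
      rw [Complex.exp_sub, Complex.exp_log hc, hexp, mul_div_cancel_left₀ _ hc]⟩
  unfold logChange
  set k := Classical.epsilon fun k : ℝ → ℂ =>
    Continuous k ∧ ∀ s, Complex.exp (k s) = γ.extend s - z
  have exp_sub_eq : ∀ s, Complex.exp (h s - k s) = c := fun s => by
    rw [Complex.exp_sub, hexp, ← k_exp, mul_div_cancel_right₀ _ (Complex.exp_ne_zero _)]
  have const : h 1 - k 1 = h 0 - k 0 :=
    Complex.isCoveringMap_exp.const_of_comp (hh.sub k_cont)
      (fun s s' => Subtype.ext ((exp_sub_eq s).trans (exp_sub_eq s').symm)) 1 0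
  linear_combination -const

theorem exp_logChange (γ : Path a b) (hz : ∀ s, γ s ≠ z) :
    Complex.exp (logChange γ z) = (b - z) / (a - z) := by
  obtain ⟨h, h_cont, h_exp⟩ := exists_continuous_log (g := fun s => γ.extend s - z)
    (by fun_prop) (fun s => sub_ne_zero.2 (hz _))
  rw [logChange_eq γ h_cont one_ne_zero (by simpa using h_exp), Complex.exp_sub, h_exp, h_exp,
    Path.extend_one, Path.extend_zero]

/-- Both sides are the change of `log (α s - β r)` along two adjacent sides of the unit square,
up to the sign of the argument. -/
theorem logChange_sub_logChange (α : Path a a') (β : Path b b') (h : ∀ s r, α s ≠ β r) :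
    logChange α b - logChange β a = logChange α b' - logChange β a' := by
  obtain ⟨H, H_cont, H_exp⟩ := exists_continuous_log
    (g := fun p : ℝ × ℝ => α.extend p.1 - β.extend p.2) (by fun_prop)
    (fun p => sub_ne_zero.2 (h _ _))
  rw [logChange_eq α (h := fun s => H (s, 0)) (by fun_prop) one_ne_zero (by simp [H_exp]),
    logChange_eq α (h := fun s => H (s, 1)) (by fun_prop) one_ne_zero (by simp [H_exp]),
    logChange_eq β (h := fun r => H (0, r)) (by fun_prop) (neg_ne_zero.2 one_ne_zero)
      (by simp [H_exp]),
    logChange_eq β (h := fun r => H (1, r)) (by fun_prop) (neg_ne_zero.2 one_ne_zero)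
      (by simp [H_exp])]
  ring

theorem exp_sum_logChange_sub_logChange {ι : Type*} [Fintype ι] {B : ι → ℂ}
    (γ : ∀ j, Path a (B j)) (γ' : ∀ j, Path a' (B j)) (hγ : ∀ j s, γ j s ≠ a')
    (hγ' : ∀ j s, γ' j s ≠ a) :
    Complex.exp (∑ j, (logChange (γ j) a' - logChange (γ' j) a)) =
      ∏ j, -((B j - a') / (B j - a)) := by
  rw [Complex.exp_sum]
  refine Finset.prod_congr rfl fun j _ => ?_
  have a_ne : a - a' ≠ 0 := sub_ne_zero.2 (by simpa using hγ j 0)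
  have B_ne : B j - a ≠ 0 := sub_ne_zero.2 (by simpa using hγ' j 1)
  rw [Complex.exp_sub, exp_logChange _ (hγ j), exp_logChange _ (hγ' j), ← neg_sub a a']
  field_simp

/-- Write `P i k` for the total change of `log (A k - ·)` from `A i` to the `B j`, minus that of
`log (A i - ·)` from `A k`. Disjointness makes `2 * P i k` a coboundary, so `P` is additive,
whereas `exp (P i k)` is minus a coboundary. -/
theorem not_planar_K33 {A B : Fin 3 → ℂ} (γ : ∀ i j, Path (A i) (B j))
    (disj : ∀ i j k l, i ≠ k → j ≠ l → ∀ s r, γ i j s ≠ γ k l r) : False := by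
  have exists_ne : ∀ i : Fin 3, ∃ k, k ≠ i := by decide
  have B_ne_A : ∀ i j, B j ≠ A i := fun i j => by
    obtain ⟨k, hk⟩ := exists_ne i
    obtain ⟨l, hl⟩ := exists_ne j
    simpa using disj k j i l hk hl.symm 1 0
  have γ_ne_A : ∀ i j k, i ≠ k → ∀ s, γ i j s ≠ A k := fun i j k hik s => by
    obtain ⟨l, hl⟩ := exists_ne j
    simpa using disj i j k l hik hl.symm s 0
  let P i k := ∑ j, (logChange (γ i j) (A k) - logChange (γ k j) (A i))
  let u i := ∏ j, (B j - A i)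
  have u_ne : ∀ i, u i ≠ 0 := fun i => Finset.prod_ne_zero_iff.2 fun j _ =>
    sub_ne_zero.2 (B_ne_A i j)
  have exp_P : ∀ i k, i ≠ k → Complex.exp (P i k) = -(u k / u i) := fun i k hik => by
    rw [exp_sum_logChange_sub_logChange _ _ (fun j => γ_ne_A i j k hik)
      fun j => γ_ne_A k j i hik.symm, Finset.prod_neg, Finset.prod_div_distrib]
    norm_num [u]
  have P_add : P 0 1 + P 1 2 = P 0 2 := by
    let Q i := logChange (γ i 0) (B 1) + logChange (γ i 0) (B 2) + logChange (γ i 1) (B 0) +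
      logChange (γ i 1) (B 2) + logChange (γ i 2) (B 0) + logChange (γ i 2) (B 1)
    have two_P : ∀ i k, i ≠ k → 2 * P i k = Q i - Q k := fun i k hik => by
      have rel : ∀ j l, j ≠ l → _ := fun j l hjl =>
        logChange_sub_logChange _ _ (disj i j k l hik hjl)
      simp only [P, Q, Fin.sum_univ_three]
      linear_combination rel 0 1 (by decide) + rel 0 2 (by decide) + rel 1 0 (by decide) +
        rel 1 2 (by decide) + rel 2 0 (by decide) + rel 2 1 (by decide)
    linear_combination (two_P 0 1 (by decide) + two_P 1 2 (by decide) -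
      two_P 0 2 (by decide)) / 2
  have quot_eq_neg : u 2 / u 0 = -(u 2 / u 0) := by
    rw [← exp_P 0 2 (by decide), ← P_add, Complex.exp_add, exp_P 0 1 (by decide),
      exp_P 1 2 (by decide), neg_mul_neg, mul_comm, div_mul_div_cancel₀ (u_ne 1)]
  exact div_ne_zero (u_ne 2) (u_ne 0) (self_eq_neg.1 quot_eq_neg)

end Nonplanarity

/-! ### The complete bipartite graph `K₃,₃` does not embed in the sphere -/

section SphereEmbedding

/-- The set `X` admits a continuous injection into the 2-sphere, given by a function on the whole
space whose values off `X` are irrelevant. -/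
def EmbedsInSphere {E : Type*} [TopologicalSpace E] (X : Set E) : Prop :=
  ∃ f : E → Metric.sphere (0 : E3) 1, ContinuousOn f X ∧ Set.InjOn f X

theorem exists_continuousOn_injOn_compl_singleton (q : Metric.sphere (0 : E3) 1) :
    ∃ g : Metric.sphere (0 : E3) 1 → ℂ, ContinuousOn g {q}ᶜ ∧ Set.InjOn g {q}ᶜ := by
  have : Fact (Module.finrank ℝ E3 = 2 + 1) := ⟨finrank_euclideanSpace_fin⟩
  have source_eq := stereographic'_source (n := 2) q
  exact ⟨Complex.orthonormalBasisOneI.repr.symm ∘ stereographic' 2 q,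
    Complex.orthonormalBasisOneI.repr.symm.continuous.comp_continuousOn
      (source_eq ▸ (stereographic' 2 q).continuousOn),
    Complex.orthonormalBasisOneI.repr.symm.injective.comp_injOn
      (source_eq ▸ (stereographic' 2 q).injOn)⟩

variable {E : Type*} [TopologicalSpace E] {X : Set E}

theorem EmbedsInSphere.of_homeomorph (e : X ≃ₜ Metric.sphere (0 : E3) 1) : EmbedsInSphere X := by
  have : Nonempty (Metric.sphere (0 : E3) 1) :=
    (NormedSpace.sphere_nonempty.2 zero_le_one).to_subtype
  have extend_val : X.domRestrict (Function.extend Subtype.val e Classical.ofNonempty) = e :=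
    funext fun x => Subtype.val_injective.extend_apply e _ x
  refine ⟨Function.extend Subtype.val e Classical.ofNonempty, ?_, ?_⟩
  · rw [continuousOn_iff_continuous_domRestrict, extend_val]
    exact e.continuous
  · rw [Set.injOn_iff_injective, extend_val]
    exact e.injective

theorem EmbedsInSphere.not_K33 (hX : EmbedsInSphere X) {x y : Fin 3 → E}
    {S : Fin 3 → Fin 3 → Set E} (joined : ∀ i j, JoinedIn (S i j) (x i) (y j))
    (sub : ∀ i j, S i j ⊆ X) (disj : ∀ i j k l, i ≠ k → j ≠ l → Disjoint (S i j) (S k l))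
    {q : E} (hq : q ∈ X) (q_notMem : ∀ i j, q ∉ S i j) : False := by
  obtain ⟨f, f_cont, f_inj⟩ := hX
  obtain ⟨g, g_cont, g_inj⟩ := exists_continuousOn_injOn_compl_singleton (f q)
  have f_mapsTo : Set.MapsTo f (X \ {q}) {f q}ᶜ := fun z hz h => hz.2 (f_inj hz.1 hq h)
  have gf_cont : ContinuousOn (g ∘ f) (X \ {q}) :=
    g_cont.comp (f_cont.mono Set.sdiff_subset) f_mapsTo
  have gf_inj : Set.InjOn (g ∘ f) (X \ {q}) :=
    g_inj.comp (f_inj.mono Set.sdiff_subset) f_mapsTo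
  have sub' : ∀ i j, S i j ⊆ X \ {q} := fun i j =>
    Set.subset_sdiff_singleton (sub i j) (q_notMem i j)
  have joined' : ∀ i j, JoinedIn ((g ∘ f) '' S i j) ((g ∘ f) (x i)) ((g ∘ f) (y j)) :=
    fun i j => (joined i j).map_continuousOn (gf_cont.mono (sub' i j))
  refine not_planar_K33 (fun i j => (joined' i j).somePath) fun i j k l hik hjl s r h => ?_
  refine Set.disjoint_left.1 ((disj i j k l hik hjl).image gf_inj (sub' i j) (sub' k l))
    ((joined' i j).somePath_mem s) ?_
  rw [h]
  exact (joined' k l).somePath_mem r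

end SphereEmbedding

/-! ### Simplicial complexes in the sphere -/

section SimplicialComplex

variable {E : Type*} [AddCommGroup E] [Module ℝ E]

/-- The relative interior of the simplex with vertex set `F`: the convex combinations of `F` all of
whose weights are positive. -/
def openSimplex (F : Finset E) : Set E :=
  {x | ∃ w : E → ℝ, (∀ v ∈ F, 0 < w v) ∧ ∑ v ∈ F, w v = 1 ∧ ∑ v ∈ F, w v • v = x}

theorem openSimplex_subset_convexHull (F : Finset E) :
    openSimplex F ⊆ convexHull ℝ (F : Set E) := by
  rintro x ⟨w, w_pos, w_sum, rfl⟩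
  exact Finset.mem_convexHull'.2 ⟨w, fun v hv => (w_pos v hv).le, w_sum, rfl⟩

theorem openSimplex_nonempty {F : Finset E} (hF : F.Nonempty) : (openSimplex F).Nonempty :=
  ⟨_, fun _ => (F.card : ℝ)⁻¹, fun _ _ => by have := hF.card_pos; positivity,
    by simp [hF.card_ne_zero], rfl⟩

theorem nonempty_of_mem_openSimplex {F : Finset E} {x : E} (hx : x ∈ openSimplex F) :
    F.Nonempty :=
  Finset.coe_nonempty.1 (convexHull_nonempty_iff.1 ⟨x, openSimplex_subset_convexHull F hx⟩)

theorem mem_openSimplex_singleton (a : E) : a ∈ openSimplex {a} :=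
  ⟨fun _ => 1, by simp, by simp, by simp⟩

variable {L : SimplicialComplex ℝ E}

theorem mem_space_of_mem_openSimplex {F : Finset E} (hF : F ∈ L.faces) {x : E}
    (hx : x ∈ openSimplex F) : x ∈ L.space :=
  L.convexHull_subset_space hF (openSimplex_subset_convexHull F hx)

theorem segment_subset_space {F : Finset E} (hF : F ∈ L.faces) {x y : E}
    (hx : x ∈ convexHull ℝ (F : Set E)) (hy : y ∈ convexHull ℝ (F : Set E)) :
    segment ℝ x y ⊆ L.space :=
  ((convex_convexHull ℝ _).segment_subset hx hy).trans (L.convexHull_subset_space hF)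

/-- The union of the faces of `L` all of whose vertices lie in `U`. -/
def inducedSpace (L : SimplicialComplex ℝ E) (U : Set E) : Set E :=
  {x | ∃ F ∈ L.faces, (F : Set E) ⊆ U ∧ x ∈ convexHull ℝ (F : Set E)}

theorem inducedSpace_subset_space (U : Set E) : inducedSpace L U ⊆ L.space :=
  fun _ ⟨_, hF, _, hx⟩ => L.convexHull_subset_space hF hx

theorem disjoint_inducedSpace {U V : Set E} (h : Disjoint U V) :
    Disjoint (inducedSpace L U) (inducedSpace L V) := by
  refine Set.disjoint_left.2 fun x ⟨F, hF, hFU, hxF⟩ ⟨G, hG, hGV, hxG⟩ => ?_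
  have hx := L.inter_subset_convexHull hF hG ⟨hxF, hxG⟩
  rw [(h.mono hFU hGV).inter_eq, convexHull_empty] at hx
  exact hx

theorem openSegment_subset_openSimplex [DecidableEq E] {F G : Finset E} {x y : E}
    (hx : x ∈ openSimplex F) (hy : y ∈ openSimplex G) :
    openSegment ℝ x y ⊆ openSimplex (F ∪ G) := by
  obtain ⟨w, w_pos, w_sum, rfl⟩ := hx
  obtain ⟨u, u_pos, u_sum, rfl⟩ := hy
  rintro z ⟨a, b, a_pos, b_pos, a_add_b, rfl⟩
  refine ⟨fun v => a * (if v ∈ F then w v else 0) + b * (if v ∈ G then u v else 0), ?_, ?_, ?_⟩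
  · have w_nonneg : ∀ v, 0 ≤ if v ∈ F then w v else 0 := fun v => by
      split_ifs with hv
      exacts [(w_pos v hv).le, le_rfl]
    have u_nonneg : ∀ v, 0 ≤ if v ∈ G then u v else 0 := fun v => by
      split_ifs with hv
      exacts [(u_pos v hv).le, le_rfl]
    intro v hv
    rcases Finset.mem_union.1 hv with hv | hv
    · exact add_pos_of_pos_of_nonneg (mul_pos a_pos (by simpa [hv] using w_pos v hv))
        (mul_nonneg b_pos.le (u_nonneg v))
    · exact add_pos_of_nonneg_of_pos (mul_nonneg a_pos.le (w_nonneg v))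
        (mul_pos b_pos (by simpa [hv] using u_pos v hv))
  · rw [Finset.sum_add_distrib, ← Finset.mul_sum, ← Finset.mul_sum, Finset.sum_ite_mem,
      Finset.sum_ite_mem, Finset.union_inter_cancel_left, Finset.union_inter_cancel_right, w_sum,
      u_sum]
    linarith
  · simp only [add_smul, mul_smul, ite_smul, zero_smul]
    rw [Finset.sum_add_distrib, ← Finset.smul_sum, ← Finset.smul_sum, Finset.sum_ite_mem,
      Finset.sum_ite_mem, Finset.union_inter_cancel_left, Finset.union_inter_cancel_right]

theorem subset_of_mem_openSimplex_of_mem_convexHull {F G : Finset E} (hF : F ∈ L.faces)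
    (hG : G ∈ L.faces) {x : E} (hxF : x ∈ openSimplex F)
    (hxG : x ∈ convexHull ℝ (G : Set E)) : F ⊆ G := by
  classical
  have hx := L.inter_subset_convexHull hF hG ⟨openSimplex_subset_convexHull F hxF, hxG⟩
  obtain ⟨w, w_pos, w_sum, rfl⟩ := hxF
  rw [← Finset.coe_inter, Finset.mem_convexHull'] at hx
  obtain ⟨u, -, u_sum, u_eq⟩ := hx
  have inter_F : F ∩ (F ∩ G) = F ∩ G := Finset.inter_eq_right.2 Finset.inter_subset_left
  have w_eq := (L.indep hF).eq_of_sum_eq_sum_subtype (w₁ := w)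
    (w₂ := fun v => if v ∈ F ∩ G then u v else 0)
    (by rw [Finset.sum_ite_mem, inter_F, w_sum, u_sum])
    (by simp only [ite_smul, zero_smul]; rw [Finset.sum_ite_mem, inter_F, u_eq])
  intro v hv
  by_contra hvG
  exact (w_pos v hv).ne' ((w_eq v hv).trans (if_neg fun h => hvG (Finset.mem_inter.1 h).2))

theorem eq_of_mem_openSimplex {F G : Finset E} (hF : F ∈ L.faces) (hG : G ∈ L.faces) {x : E}
    (hxF : x ∈ openSimplex F) (hxG : x ∈ openSimplex G) : F = G :=
  (subset_of_mem_openSimplex_of_mem_convexHull hF hG hxF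
    (openSimplex_subset_convexHull G hxG)).antisymm
  (subset_of_mem_openSimplex_of_mem_convexHull hG hF hxG
    (openSimplex_subset_convexHull F hxF))

theorem openSimplex_nontrivial {F : Finset E} (hF : F ∈ L.faces) (hF' : F.Nontrivial) :
    (openSimplex F).Nontrivial := by
  classical
  obtain ⟨a, ha⟩ := hF'.nonempty
  obtain ⟨p, hp⟩ := openSimplex_nonempty hF'.nonempty
  have a_ne_p : a ≠ p := by
    rintro rfl
    have := eq_of_mem_openSimplex (L.down_closed hF (Finset.singleton_subset_iff.2 ha)
      (Finset.singleton_nonempty a)) hF (mem_openSimplex_singleton a) hp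
    exact Finset.not_nontrivial_singleton (this ▸ hF')
  have hq := openSegment_subset_openSimplex (mem_openSimplex_singleton a) hp
    (midpoint_mem_openSegment a p)
  exact ⟨p, hp, midpoint ℝ a p, by simpa [ha] using hq, by simpa using a_ne_p⟩

theorem notMem_inducedSpace {F : Finset E} (hF : F ∈ L.faces) {x : E} (hx : x ∈ openSimplex F)
    {U : Set E} {v : E} (hv : v ∈ F) (hvU : v ∉ U) : x ∉ inducedSpace L U :=
  fun ⟨_, hG, hGU, hxG⟩ =>
    hvU (hGU (subset_of_mem_openSimplex_of_mem_convexHull hF hG hx hxG hv))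

theorem eq_or_mem_openSimplex_of_mem_segment {F : Finset E} {a p x : E} (ha : a ∈ F)
    (hp : p ∈ openSimplex F) (hx : x ∈ segment ℝ a p) : x = a ∨ x ∈ openSimplex F := by
  classical
  rw [← insert_endpoints_openSegment] at hx
  rcases hx with rfl | rfl | hx
  · exact .inl rfl
  · exact .inr hp
  · exact .inr (by
      simpa [ha] using openSegment_subset_openSimplex (mem_openSimplex_singleton a) hp hx)

theorem notMem_segment_of_mem_openSimplex {F G : Finset E} (hF : F ∈ L.faces) (hG : G ∈ L.faces)
    {a p q : E} (ha : a ∈ F) (hp : p ∈ openSimplex F) (hq : q ∈ openSimplex G) (hGa : G ≠ {a})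
    (hGF : G ≠ F) : q ∉ segment ℝ a p := fun hqs => by
  rcases eq_or_mem_openSimplex_of_mem_segment ha hp hqs with rfl | hqF
  · exact hGa (eq_of_mem_openSimplex hG (L.down_closed hF (Finset.singleton_subset_iff.2 ha)
      (Finset.singleton_nonempty q)) hq (mem_openSimplex_singleton q))
  · exact hGF (eq_of_mem_openSimplex hG hF hq hqF)

theorem disjoint_inducedSpace_segment {F : Finset E} (hF : F ∈ L.faces) {a p : E} (ha : a ∈ F)
    (hp : p ∈ openSimplex F) {U : Set E} (haU : a ∉ U) :
    Disjoint (inducedSpace L U) (segment ℝ a p) := by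
  refine Set.disjoint_right.2 fun x hx => ?_
  rcases eq_or_mem_openSimplex_of_mem_segment ha hp hx with rfl | hx
  · exact notMem_inducedSpace (L.down_closed hF (Finset.singleton_subset_iff.2 ha)
      (Finset.singleton_nonempty x)) (mem_openSimplex_singleton x) (Finset.mem_singleton_self x) haU
  · exact notMem_inducedSpace hF hx ha haU

variable [DecidableEq E]

theorem exists_mem_openSimplex_of_mem_segment {F G : Finset E} {x y z : E}
    (hx : x ∈ openSimplex F) (hy : y ∈ openSimplex G) (hz : z ∈ segment ℝ x y) :
    ∃ P Q, (P = F ∨ P = ∅) ∧ (Q = G ∨ Q = ∅) ∧ z ∈ openSimplex (P ∪ Q) := by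
  rw [← insert_endpoints_openSegment] at hz
  rcases hz with rfl | rfl | hz
  · exact ⟨F, ∅, .inl rfl, .inr rfl, by rwa [Finset.union_empty]⟩
  · exact ⟨∅, G, .inr rfl, .inl rfl, by rwa [Finset.empty_union]⟩
  · exact ⟨F, G, .inl rfl, .inl rfl, openSegment_subset_openSimplex hx hy hz⟩

variable [TopologicalSpace E] [ContinuousAdd E] [ContinuousSMul ℝ E]

/-- If all `F i ∪ G j` were faces, the segments from a point of `openSimplex (F i)` to a point of
`openSimplex (G j)` would draw `K₃,₃` in the sphere. -/
theorem EmbedsInSphere.not_join (hL : EmbedsInSphere L.space) {F G : Fin 3 → Finset E}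
    (F_inj : F.Injective) (G_inj : G.Injective) (disj : ∀ i j, Disjoint (F i) (G j))
    (face : ∀ i j, F i ∪ G j ∈ L.faces) {x y : Fin 3 → E} (hx : ∀ i, x i ∈ openSimplex (F i))
    (hy : ∀ j, y j ∈ openSimplex (G j)) {q : E} (hq : q ∈ L.space)
    (q_notMem : ∀ i j, q ∉ segment ℝ (x i) (y j)) : False := by
  have subset_of : ∀ {P F : Finset E}, P = F ∨ P = ∅ → P ⊆ F := by rintro P F (rfl | rfl) <;> simp
  have face_of : ∀ i j P Q z, (P = F i ∨ P = ∅) → (Q = G j ∨ Q = ∅) → z ∈ openSimplex (P ∪ Q) →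
      P ∪ Q ∈ L.faces := fun i j P Q z hP hQ hz =>
    L.down_closed (face i j) (Finset.union_subset_union (subset_of hP) (subset_of hQ))
      (nonempty_of_mem_openSimplex hz)
  refine hL.not_K33 (fun i j => .of_segment_subset subset_rfl) (fun i j => ?_)
    (fun i j k l hik hjl => Set.disjoint_left.2 fun z hz hz' => ?_) hq q_notMem
  · exact segment_subset_space (face i j)
      (convexHull_mono (by simp) (openSimplex_subset_convexHull _ (hx i)))
      (convexHull_mono (by simp) (openSimplex_subset_convexHull _ (hy j)))
  · obtain ⟨P, Q, hP, hQ, hz⟩ := exists_mem_openSimplex_of_mem_segment (hx i) (hy j) hz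
    obtain ⟨P', Q', hP', hQ', hz'⟩ := exists_mem_openSimplex_of_mem_segment (hx k) (hy l) hz'
    obtain ⟨P_eq, Q_eq⟩ := eq_and_eq_of_union_eq_union
      (eq_of_mem_openSimplex (face_of i j P Q z hP hQ hz) (face_of k l P' Q' z hP' hQ' hz') hz hz')
      ((disj i l).mono (subset_of hP) (subset_of hQ'))
      ((disj k j).mono (subset_of hP') (subset_of hQ))
    have P_empty : P = ∅ := by
      rcases hP with rfl | hP
      exacts [P_eq.trans (hP'.resolve_left (P_eq ▸ F_inj.ne hik)), hP]
    have Q_empty : Q = ∅ := by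
      rcases hQ with rfl | hQ
      exacts [Q_eq.trans (hQ'.resolve_left (Q_eq ▸ G_inj.ne hjl)), hQ]
    simpa [P_empty, Q_empty] using nonempty_of_mem_openSimplex hz

/-- Three pages with a common edge would contain the `K₃,₃` on a vertex of each page and the two
ends and an interior point of the edge. -/
theorem EmbedsInSphere.not_three_pages (hL : EmbedsInSphere L.space) {F : Fin 3 → Finset E}
    (F_inj : F.Injective) (F_nonempty : ∀ i, (F i).Nonempty) {a b : E} (hab : a ≠ b)
    (disj : ∀ i, Disjoint (F i) {a, b}) (face : ∀ i, F i ∪ {a, b} ∈ L.faces) : False := by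
  choose x hx using fun i => openSimplex_nonempty (F_nonempty i)
  have edge : {a, b} ∈ L.faces := L.down_closed (face 0) (by simp) (by simp)
  obtain ⟨p, hp, q, hq, p_ne_q⟩ := openSimplex_nontrivial edge
    (by simpa [Finset.Nontrivial] using Set.nontrivial_pair hab)
  let G : Fin 3 → Finset E := ![{a}, {b}, {a, b}]
  have G_sub : ∀ j, G j ⊆ {a, b} := by simp [G, Fin.forall_fin_succ]
  have G_inj : G.Injective := injective_vecCons_three (by simpa)
    (by simp [hab.symm, Finset.ext_iff]) (by simp [hab, Finset.ext_iff])
  have G_face : ∀ j, G j ∈ L.faces := fun j =>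
    L.down_closed edge (G_sub j) (by fin_cases j <;> simp [G])
  have hy : ∀ j, ![a, b, p] j ∈ openSimplex (G j) := by
    simp [G, Fin.forall_fin_succ, mem_openSimplex_singleton, hp]
  have not_sub : ∀ i H, F i ⊆ H → H ≠ {a, b} := fun i H hH h =>
    (F_nonempty i).ne_empty ((disj i).eq_bot_of_le (h ▸ hH))
  have face' : ∀ i j, F i ∪ G j ∈ L.faces := fun i j => L.down_closed (face i)
      (Finset.union_subset_union_right (G_sub j)) ((F_nonempty i).mono Finset.subset_union_left)
  refine hL.not_join F_inj G_inj (fun i j => (disj i).mono_right (G_sub j)) face' hx hy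
    (mem_space_of_mem_openSimplex edge hq) fun i j hqs => ?_
  rw [← insert_endpoints_openSegment] at hqs
  rcases hqs with rfl | rfl | hqs
  · exact not_sub i _ subset_rfl (eq_of_mem_openSimplex
      (L.down_closed (face i) Finset.subset_union_left (F_nonempty i)) edge (hx i) hq)
  · have : j = 2 := G_inj (eq_of_mem_openSimplex (G_face j) edge (hy j) hq)
    exact p_ne_q (by simp [this])
  · exact not_sub i _ Finset.subset_union_left (eq_of_mem_openSimplex (face' i j) edge
      (openSegment_subset_openSimplex (hx i) (hy j) hqs) hq)

theorem joinedIn_inducedSpace {U : Set E} {x y : E} (hxy : {x, y} ∈ L.faces) (hx : x ∈ U)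
    (hy : y ∈ U) : JoinedIn (inducedSpace L U) x y :=
  .of_segment_subset fun _ hz =>
    ⟨{x, y}, hxy, by simp [Set.insert_subset_iff, hx, hy], by simpa [convexHull_pair] using hz⟩

theorem EmbedsInSphere.not_three_triangles (hL : EmbedsInSphere L.space) {a b : E} (hab : a ≠ b)
    {x : Fin 3 → E} (x_inj : x.Injective) (hx : ∀ i, x i ≠ a ∧ x i ≠ b)
    (face : ∀ i, {x i, a, b} ∈ L.faces) : False :=
  hL.not_three_pages (F := fun i => {x i}) (Finset.singleton_injective.comp x_inj) (by simp) hab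
    (by simpa using hx) face

omit [DecidableEq E] in
theorem EmbedsInSphere.card_le_three (hL : EmbedsInSphere L.space) {F : Finset E}
    (hF : F ∈ L.faces) : F.card ≤ 3 := by
  classical
  by_contra! hcard
  obtain ⟨G, hGF, hG⟩ := Finset.exists_subset_card_eq hcard
  obtain ⟨a, b, c, d, hab, hac, had, hbc, hbd, hcd, rfl⟩ := Finset.card_eq_four.1 hG
  have face (H : Finset E) (H_sub : H ⊆ {c, d}) : H ∪ {a, b} ∈ L.faces :=
    L.down_closed hF (subset_trans (by grind) hGF) (by simp)
  have inj : Function.Injective ![{c}, {d}, ({c, d} : Finset E)] := injective_vecCons_three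
    (by simpa) (by simp [hcd.symm, Finset.ext_iff]) (by simp [hcd, Finset.ext_iff])
  exact hL.not_three_pages inj (by simp [Fin.forall_fin_succ]) hab
    (by simp [Fin.forall_fin_succ, *]) fun i => face _ (by fin_cases i <;> simp)

/-- The two tripods and the segments from the vertices of the triangle to an interior point `p`
would draw `K₃,₃` in the sphere. -/
theorem EmbedsInSphere.not_two_tripods (hL : EmbedsInSphere L.space) {x : Fin 3 → E}
    (x_inj : x.Injective) (face : Finset.univ.image x ∈ L.faces) {y z : E} {U V : Fin 3 → Set E}
    (hU : ∀ i, JoinedIn (inducedSpace L (U i)) (x i) y)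
    (hV : ∀ i, JoinedIn (inducedSpace L (V i)) (x i) z)
    (x_notMem_U : ∀ i k, i ≠ k → x k ∉ U i) (x_notMem_V : ∀ i k, i ≠ k → x k ∉ V i)
    (disj : ∀ i k, i ≠ k → Disjoint (U i) (V k)) : False := by
  set T := Finset.univ.image x
  have x_mem : ∀ i, x i ∈ T := by simp [T]
  have edge : {x 0, x 1} ∈ L.faces :=
    L.down_closed face (by simp [Finset.insert_subset_iff, x_mem]) (by simp)
  obtain ⟨p, hp⟩ := openSimplex_nonempty (F := T) ⟨x 0, x_mem 0⟩
  obtain ⟨q, hq⟩ := openSimplex_nonempty (F := {x 0, x 1}) (by simp)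
  have disj_segment : ∀ W i, x i ∉ W → Disjoint (inducedSpace L W) (segment ℝ (x i) p) :=
    fun W i => disjoint_inducedSpace_segment face (x_mem i) hp
  have q_notMem_inducedSpace : ∀ W : Fin 3 → Set E, (∀ i k, i ≠ k → x k ∉ W i) → ∀ i,
      q ∉ inducedSpace L (W i) := fun W hW i => by
    obtain rfl | hi := eq_or_ne i 0
    exacts [notMem_inducedSpace edge hq (by simp) (hW 0 1 (by decide)),
      notMem_inducedSpace edge hq (by simp) (hW i 0 hi)]
  have T_card : T.card = 3 := Finset.card_image_of_injective _ x_inj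
  have edge_card : ({x 0, x 1} : Finset E).card = 2 := Finset.card_pair (x_inj.ne (by decide))
  have q_notMem_segment : ∀ i, q ∉ segment ℝ (x i) p := fun i =>
    notMem_segment_of_mem_openSimplex face edge (x_mem i) hp hq
      (fun h => by simp [h] at edge_card) (fun h => by simp [h, T_card] at edge_card)
  let S : Fin 3 → Fin 3 → Set E :=
    fun i => ![inducedSpace L (U i), inducedSpace L (V i), segment ℝ (x i) p]
  refine hL.not_K33 (x := x) (y := ![y, z, p]) (S := S) (fun i j => ?_) (fun i j => ?_)
    (fun i j k l hik hjl => ?_) (mem_space_of_mem_openSimplex edge hq) (fun i j => ?_)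
  · fin_cases j
    exacts [hU i, hV i, .of_segment_subset subset_rfl]
  · fin_cases j
    exacts [inducedSpace_subset_space _, inducedSpace_subset_space _,
      segment_subset_space face (subset_convexHull ℝ _ (x_mem i))
        (openSimplex_subset_convexHull T hp)]
  · fin_cases j <;> fin_cases l
    exacts [absurd rfl hjl, disjoint_inducedSpace (disj i k hik),
      disj_segment _ _ (x_notMem_U i k hik), (disjoint_inducedSpace (disj k i hik.symm)).symm,
      absurd rfl hjl, disj_segment _ _ (x_notMem_V i k hik),
      (disj_segment _ _ (x_notMem_U k i hik.symm)).symm,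
      (disj_segment _ _ (x_notMem_V k i hik.symm)).symm, absurd rfl hjl]
  · fin_cases j
    exacts [q_notMem_inducedSpace U x_notMem_U i, q_notMem_inducedSpace V x_notMem_V i,
      q_notMem_segment i]

/-- The triangle is `{a, b, c}`; the tripod at `y` is subdivided on its leg to `a` and the one at
`z` on its leg to `b`. -/
theorem EmbedsInSphere.not_two_subdivided_tripods (hL : EmbedsInSphere L.space)
    {a b c y z u v : E} (distinct : [a, b, c, y, z, u, v].Nodup) (face : {a, b, c} ∈ L.faces)
    (au : {a, u} ∈ L.faces) (uy : {u, y} ∈ L.faces) (b_y : {b, y} ∈ L.faces)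
    (cy : {c, y} ∈ L.faces) (az : {a, z} ∈ L.faces) (bv : {b, v} ∈ L.faces)
    (vz : {v, z} ∈ L.faces) (cz : {c, z} ∈ L.faces) : False := by
  simp only [List.nodup_cons, List.mem_cons, List.not_mem_nil, or_false, not_or] at distinct
  have image_eq : Finset.univ.image ![a, b, c] = {a, b, c} := by
    ext; simp [Fin.exists_fin_succ, eq_comm]
  refine hL.not_two_tripods (x := ![a, b, c]) (y := y) (z := z) (U := ![{a, u, y}, {b, y}, {c, y}])
    (V := ![{a, z}, {b, v, z}, {c, z}]) (injective_vecCons_three (by simp [distinct])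
      (by simp [distinct]) (by simp [distinct])) (image_eq ▸ face) ?_ ?_ ?_ ?_ ?_
  · simp [Fin.forall_fin_succ, joinedIn_inducedSpace, b_y, cy,
      (joinedIn_inducedSpace au _ _).trans (joinedIn_inducedSpace uy _ _)]
  · simp [Fin.forall_fin_succ, joinedIn_inducedSpace, az, cz,
      (joinedIn_inducedSpace bv _ _).trans (joinedIn_inducedSpace vz _ _)]
  · simp [Fin.forall_fin_succ, distinct, Ne.symm]
  · simp [Fin.forall_fin_succ, distinct, Ne.symm]
  · simp [Fin.forall_fin_succ, distinct, Ne.symm]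

end SimplicialComplex

/-! ### Right-angled suspensions -/

section RASuspensions

variable (L : SimplicialComplex ℝ E3) (m : E3 → E3 → ℕ)

/-- `x` and `y` are joined by an edge labeled `2`. -/
def RightAdj (x y : E3) : Prop :=
  x ≠ y ∧ {x, y} ∈ L.faces ∧ m x y = 2

/-- The right-angled link of `p`: the faces of its link all of whose vertices are joined to `p`
by edges labeled `2`. -/
def raLink (p : E3) : Set (Finset E3) :=
  {F ∈ link L p | ∀ v ∈ F, m p v = 2}

/-- The largest candidate for an RA-suspension with suspension points `p` and `q`: its base
consists of all the faces lying in both right-angled links. -/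
def raSusp (p q : E3) : Set (Finset E3) :=
  joinSusp (raLink L m p ∩ raLink L m q) p q

/-- `S` is an infinite, maximal RA-suspension in `L`, exhibited with its base `Z` and suspension
points `t` and `t'`. -/
structure IsInfMaxRASuspData (S Z : Set (Finset E3)) (t t' : E3) : Prop
    extends IsRASuspData L m S Z t t' where
  infinite : InfiniteBase Z
  full : IsFullSubcomplex L Z
  maximal : ∀ T, IsRASusp L m T → S ⊆ T → S = T

/-- The properties of a metric flag labeled triangulation of the 2-sphere that the comparison of
RA-suspensions rests on: the complex embeds in the 2-sphere, and a 3-circuit with two edges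
labeled `2` bounds a 2-simplex. -/
structure IsSphericalRAFlag : Prop where
  embeds : EmbedsInSphere L.space
  symm : ∀ s t, m s t = m t s
  triangle : ∀ ⦃x y z⦄, RightAdj L m x y → RightAdj L m x z → y ≠ z → {y, z} ∈ L.faces →
    {x, y, z} ∈ L.faces

variable {L m} {S T Z W : Set (Finset E3)} {t t' p q : E3} {F : Finset E3}

theorem IsLabeledS2.isSphericalRAFlag (hL : IsLabeledS2 L m) (hflag : MetricFlag L m) :
    IsSphericalRAFlag L m where
  embeds := let ⟨e⟩ := hL.sphere; .of_homeomorph e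
  symm := hL.symm
  triangle x y z hxy hxz hyz face := by
    rw [hflag x y z hxy.1 hyz hxz.1 hxy.2.1 face hxz.2.1, hL.symm z x, hxy.2.2, hxz.2.2]
    have : 0 < m y z := zero_lt_two.trans_le (hL.two_le y z hyz face)
    have : 0 < 1 / (m y z : ℝ) := by positivity
    push_cast
    linarith

theorem IsInfMaxRASusp.exists_data (hS : IsInfMaxRASusp L m S) :
    ∃ Z t t', IsInfMaxRASuspData L m S Z t t' :=
  let ⟨⟨Z, t, t', data, infinite, full⟩, maximal⟩ := hS
  ⟨Z, t, t', ⟨data, infinite, full, maximal⟩⟩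

theorem IsSphericalRAFlag.rightAdj_comm (hL : IsSphericalRAFlag L m) {x y : E3} :
    RightAdj L m x y ↔ RightAdj L m y x := by
  rw [RightAdj, RightAdj, ne_comm, Finset.pair_comm, hL.symm]

theorem mem_of_mem_raLink (hF : F ∈ raLink L m p) {G : Finset E3} (hG : G ⊆ F)
    (G_nonempty : G.Nonempty) : G ∈ raLink L m p :=
  ⟨⟨L.down_closed hF.1.1 hG G_nonempty, fun hp => hF.1.2.1 (hG hp),
    L.down_closed hF.1.2.2 (Finset.insert_subset_insert p hG) (Finset.insert_nonempty p G)⟩,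
    fun v hv => hF.2 v (hG hv)⟩

theorem singleton_mem_raLink_iff {x : E3} : {x} ∈ raLink L m p ↔ RightAdj L m p x := by
  refine ⟨fun h => ⟨by simpa using h.1.2.1, h.1.2.2, h.2 x (by simp)⟩, fun h =>
    ⟨⟨L.down_closed h.2.1 (by simp) (by simp), by simpa using h.1, h.2.1⟩, by simpa using h.2.2⟩⟩

theorem mem_joinSusp : F ∈ joinSusp Z p q ↔ F ∈ Z ∨ F = {p} ∨ F = {q} ∨
    (∃ G ∈ Z, insert p G = F) ∨ ∃ G ∈ Z, insert q G = F := by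
  simp only [joinSusp, Set.mem_union, Set.mem_insert_iff, Set.mem_singleton_iff, Set.mem_image,
    or_assoc]

theorem joinSusp_comm (Z : Set (Finset E3)) (p q : E3) : joinSusp Z p q = joinSusp Z q p := by
  rw [joinSusp, joinSusp, Set.pair_comm, Set.union_right_comm]

theorem joinSusp_mono (h : Z ⊆ W) (p q : E3) : joinSusp Z p q ⊆ joinSusp W p q := by
  unfold joinSusp
  gcongr

theorem isRASuspData_raSusp (hpq : p ≠ q) (nonempty : (raLink L m p ∩ raLink L m q).Nonempty) :
    IsRASuspData L m (raSusp L m p q) (raLink L m p ∩ raLink L m q) p q where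
  subset F hF := by
    obtain ⟨G, hGp, hGq⟩ := nonempty
    rcases mem_joinSusp.1 hF with hF | rfl | rfl | ⟨G, hG, rfl⟩ | ⟨G, hG, rfl⟩
    exacts [hF.1.1.1, L.down_closed hGp.1.2.2 (by simp) (by simp),
      L.down_closed hGq.1.2.2 (by simp) (by simp), hG.1.1.2.2, hG.2.1.2.2]
  zsubset F hF := hF.1.1.1
  zdown F hF G hG G_nonempty :=
    ⟨mem_of_mem_raLink hF.1 hG G_nonempty, mem_of_mem_raLink hF.2 hG G_nonempty⟩
  znonempty := nonempty
  tne := hpq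
  t_notin F hF := hF.1.1.2.1
  t'_notin F hF := hF.2.1.2.1
  labels v hv := ⟨hv.1.2 v (by simp), hv.2.2 v (by simp)⟩
  eq := rfl

namespace IsRASuspData

variable (h : IsRASuspData L m S Z t t')
include h

theorem swap : IsRASuspData L m S Z t' t :=
  { h with
    tne := h.tne.symm
    t_notin := h.t'_notin
    t'_notin := h.t_notin
    labels := fun v hv => (h.labels v hv).symm
    eq := h.eq.trans (joinSusp_comm Z t t') }

theorem insert_mem (hF : F ∈ Z) : insert t F ∈ S :=
  h.eq ▸ mem_joinSusp.2 (.inr (.inr (.inr (.inl ⟨F, hF, rfl⟩))))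

theorem mem_iff : F ∈ S ↔
    F.Nonempty ∧ ¬ (t ∈ F ∧ t' ∈ F) ∧ (F \ {t, t'} = ∅ ∨ F \ {t, t'} ∈ Z) := by
  have sdiff_eq (G) (hG : G ∈ Z) : G \ {t, t'} = G := by simp [h.t_notin G hG, h.t'_notin G hG]
  rw [h.eq, mem_joinSusp]
  constructor
  · rintro (hF | rfl | rfl | ⟨G, hG, rfl⟩ | ⟨G, hG, rfl⟩)
    · exact ⟨L.nonempty_of_mem_faces (h.zsubset hF), fun ht => h.t_notin F hF ht.1,
        .inr ((sdiff_eq F hF).symm ▸ hF)⟩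
    · simp [h.tne.symm]
    · simp [h.tne]
    · simp [h.tne.symm, h.t'_notin G hG, Finset.insert_sdiff_of_mem, sdiff_eq G hG, hG]
    · simp [h.tne, h.t_notin G hG, Finset.insert_sdiff_of_mem, sdiff_eq G hG, hG]
  · rintro ⟨nonempty, not_both, hF⟩
    rcases eq_sdiff_pair_or_insert not_both with F_eq | F_eq | F_eq <;>
      generalize F \ {t, t'} = G at F_eq hF <;> subst F_eq <;> rcases hF with rfl | hG
    exacts [absurd nonempty (by simp), .inl hG, by simp, .inr (.inr (.inr (.inl ⟨G, hG, rfl⟩))),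
      by simp, .inr (.inr (.inr (.inr ⟨G, hG, rfl⟩)))]

theorem mem_base_iff : F ∈ Z ↔ F ∈ S ∧ t ∉ F ∧ t' ∉ F := by
  refine ⟨fun hF => ⟨h.eq ▸ mem_joinSusp.2 (.inl hF), h.t_notin F hF, h.t'_notin F hF⟩, ?_⟩
  rintro ⟨hF, ht, ht'⟩
  rw [h.eq, mem_joinSusp] at hF
  rcases hF with hF | rfl | rfl | ⟨_, _, rfl⟩ | ⟨_, _, rfl⟩ <;> simp_all

theorem base_subset_raLink : Z ⊆ raLink L m t := fun F hF =>
  ⟨⟨h.zsubset hF, h.t_notin F hF, h.subset (h.insert_mem hF)⟩, fun v hv =>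
    (h.labels v (h.zdown F hF _ (by simpa using hv) (by simp))).1⟩

theorem subset_raSusp : S ⊆ raSusp L m t t' :=
  h.eq.subset.trans
    (joinSusp_mono (Set.subset_inter h.base_subset_raLink h.swap.base_subset_raLink) t t')

theorem rightAdj {v : E3} (hv : {v} ∈ Z) : RightAdj L m t v :=
  singleton_mem_raLink_iff.1 (h.base_subset_raLink hv)

theorem singleton_mem_iff {v : E3} : {v} ∈ S ↔ v = t ∨ v = t' ∨ {v} ∈ Z := by
  refine ⟨fun hv => ?_, ?_⟩
  · by_contra! hne
    exact hne.2.2 (h.mem_base_iff.2 ⟨hv, by simpa using hne.1.symm, by simpa using hne.2.1.symm⟩)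
  · rintro (rfl | rfl | hv)
    exacts [h.eq ▸ mem_joinSusp.2 (.inr (.inl rfl)), h.eq ▸ mem_joinSusp.2 (.inr (.inr (.inl rfl))),
      (h.mem_base_iff.1 hv).1]

theorem singleton_mem_of_mem (hF : F ∈ S) {v : E3} (hv : v ∈ F) : {v} ∈ S := by
  rw [h.singleton_mem_iff]
  by_contra! hne
  have v_mem : v ∈ F \ {t, t'} := by simp [hv, hne.1, hne.2.1]
  rcases (h.mem_iff.1 hF).2.2 with empty | mem_base
  · simp [empty] at v_mem
  · exact hne.2.2 (h.zdown _ mem_base _ (by simpa using v_mem) (by simp))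

theorem singleton_mem_base (hF : F ∈ Z) {v : E3} (hv : v ∈ F) : {v} ∈ Z :=
  h.zdown F hF _ (by simpa using hv) (by simp)

theorem pair_mem_raLink (hL : IsSphericalRAFlag L m) {x y : E3} (hx : {x} ∈ Z) (hy : {y} ∈ Z)
    (hxy : RightAdj L m x y) : {t, y} ∈ raLink L m x := by
  have x_t := hL.rightAdj_comm.1 (h.rightAdj hx)
  have t_y := h.rightAdj hy
  exact ⟨⟨t_y.2.1, by simp [x_t.1, hxy.1], hL.triangle x_t hxy t_y.1 t_y.2.1⟩,
    by simp [x_t.2.2, hxy.2.2]⟩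

end IsRASuspData

namespace IsInfMaxRASuspData

variable (h : IsInfMaxRASuspData L m S Z t t')
include h

theorem swap : IsInfMaxRASuspData L m S Z t' t :=
  { h with toIsRASuspData := h.toIsRASuspData.swap }

theorem eq_raSusp : S = raSusp L m t t' :=
  h.maximal _ ⟨_, t, t', isRASuspData_raSusp h.tne (h.znonempty.mono
    (Set.subset_inter h.base_subset_raLink h.swap.base_subset_raLink))⟩ h.subset_raSusp

theorem singleton_mem_base_of_rightAdj {v : E3} (hv : RightAdj L m t v) (hv' : RightAdj L m t' v) :
    {v} ∈ Z := by
  have v_mem : {v} ∈ S := h.eq_raSusp ▸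
    mem_joinSusp.2 (.inl ⟨singleton_mem_raLink_iff.2 hv, singleton_mem_raLink_iff.2 hv'⟩)
  exact h.mem_base_iff.2 ⟨v_mem, by simpa using hv.1, by simpa using hv'.1⟩

theorem exists_singleton_mem_base_ne {a b : E3} (hab : a ≠ b) (edge : {a, b} ∈ Z) :
    ∃ c, {c} ∈ Z ∧ c ≠ a ∧ c ≠ b := by
  by_contra! h_ab
  refine h.infinite.2 ⟨a, b, hab, Set.Subset.antisymm (fun F hF => ?_) ?_⟩
  · have F_sub : F ⊆ {a, b} := fun v hv => by
      have := h_ab v (h.singleton_mem_base hF hv)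
      simp only [Finset.mem_insert, Finset.mem_singleton]
      tauto
    have nonempty := L.nonempty_of_mem_faces (h.zsubset hF)
    simp only [Set.mem_insert_iff, Set.mem_singleton_iff, ← Finset.coe_inj, Finset.coe_pair,
      Finset.coe_singleton]
    exact nonempty.to_set.subset_pair_iff_eq.1 (by simpa using Finset.coe_subset.2 F_sub)
  · rintro F (rfl | rfl | rfl)
    exacts [h.singleton_mem_base edge (by simp), h.singleton_mem_base edge (by simp), edge]

theorem pair_notMem_faces (hL : IsSphericalRAFlag L m) {a b : E3} (hab : a ≠ b)
    (edge : {a, b} ∈ Z) : {t, t'} ∉ L.faces := by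
  intro face
  obtain ⟨c, hc, hca, hcb⟩ := h.exists_singleton_mem_base_ne hab edge
  have page (v) (hv : {v} ∈ Z) : (v ≠ t ∧ v ≠ t') ∧ {v, t, t'} ∈ L.faces := by
    have v_t := hL.rightAdj_comm.1 (h.rightAdj hv)
    have v_t' := hL.rightAdj_comm.1 (h.swap.rightAdj hv)
    exact ⟨⟨v_t.1, v_t'.1⟩, hL.triangle v_t v_t' h.tne face⟩
  have mem_base (i) : {![a, b, c] i} ∈ Z := by
    fin_cases i
    exacts [h.singleton_mem_base edge (by simp), h.singleton_mem_base edge (by simp), hc]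
  exact hL.embeds.not_three_triangles h.tne (injective_vecCons_three hab hca.symm hcb.symm)
    (fun i => (page _ (mem_base i)).1) fun i => (page _ (mem_base i)).2

theorem mem_of_forall_singleton_mem (not_face : {t, t'} ∉ L.faces) (hF : F ∈ L.faces)
    (vertices : ∀ v ∈ F, {v} ∈ S) : F ∈ S := by
  refine h.mem_iff.2 ⟨L.nonempty_of_mem_faces hF, fun ⟨ht, ht'⟩ => not_face
    (L.down_closed hF (by simp [Finset.insert_subset_iff, ht, ht']) (by simp)), ?_⟩
  refine (F \ {t, t'}).eq_empty_or_nonempty.imp_right fun nonempty => h.full.2 _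
    (L.down_closed hF Finset.sdiff_subset nonempty) fun v hv => ?_
  simp only [Finset.mem_sdiff, Finset.mem_insert, Finset.mem_singleton, not_or] at hv
  simpa [hv.2] using h.singleton_mem_iff.1 (vertices v hv.1)

theorem eq_of_forall_singleton_mem {u u' : E3} (k : IsInfMaxRASuspData L m T W u u')
    (not_face : {u, u'} ∉ L.faces) (vertices : ∀ v, {v} ∈ S → {v} ∈ T) : S = T :=
  h.maximal T ⟨W, u, u', k.toIsRASuspData⟩ fun _ hF =>
    k.mem_of_forall_singleton_mem not_face (h.subset hF) fun v hv =>
      vertices v (h.singleton_mem_of_mem hF hv)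

theorem exists_insert_pair (hL : IsSphericalRAFlag L m) (hF : F ∈ S) (F_card : F.card = 3) :
    ∃ s s' G, IsInfMaxRASuspData L m S Z s s' ∧ G ∈ Z ∧ G.card = 2 ∧ F = insert s G := by
  have card_insert {s s' G} (h : IsInfMaxRASuspData L m S Z s s') (hG : G ∈ Z) :=
    Finset.card_insert_of_notMem (h.t_notin G hG)
  rw [h.eq, mem_joinSusp] at hF
  rcases hF with hF | rfl | rfl | ⟨G, hG, rfl⟩ | ⟨G, hG, rfl⟩
  · have := hL.embeds.card_le_three (h.subset (h.insert_mem hF))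
    have := card_insert h hF
    omega
  · simp at F_card
  · simp at F_card
  · exact ⟨t, t', G, h, hG, by have := card_insert h hG; omega, rfl⟩
  · exact ⟨t', t, G, h.swap, hG, by have := card_insert h.swap hG; omega, rfl⟩

theorem eq_of_common_pole (hL : IsSphericalRAFlag L m) {u' a b : E3}
    (k : IsInfMaxRASuspData L m T W t u') (hab : a ≠ b) (edge : {a, b} ∈ Z)
    (edge' : {a, b} ∈ W) : S = T := by
  obtain rfl | ne := eq_or_ne t' u'
  · rw [h.eq_raSusp, k.eq_raSusp]
  have page {S Z t t'} (h : IsInfMaxRASuspData L m S Z t t') (edge : {a, b} ∈ Z) :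
      (t ≠ a ∧ t ≠ b) ∧ {t, a, b} ∈ L.faces :=
    ⟨by simpa using h.t_notin _ edge, h.subset (h.insert_mem edge)⟩
  refine (hL.embeds.not_three_triangles hab (injective_vecCons_three h.tne k.tne ne) ?_ ?_).elim <;>
    simp [Fin.forall_fin_succ, page h edge, page h.swap edge, page k.swap edge']

end IsInfMaxRASuspData

end RASuspensions

/-! ### Two RA-suspensions sharing a 2-simplex -/

section SharedTriangles

/-- The position of two RA-suspensions `S` and `T` sharing the 2-simplex `{t, a, b}`, of which `t`
is a suspension point of `S` and `a` one of `T`. -/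
structure SharedTriangle (L : SimplicialComplex ℝ E3) (m : E3 → E3 → ℕ) (S Z : Set (Finset E3))
    (t t' : E3) (T W : Set (Finset E3)) (a a' b : E3) : Prop where
  left : IsInfMaxRASuspData L m S Z t t'
  right : IsInfMaxRASuspData L m T W a a'
  left_edge : {a, b} ∈ Z
  right_edge : {t, b} ∈ W

namespace SharedTriangle

variable {L : SimplicialComplex ℝ E3} {m : E3 → E3 → ℕ} {S T Z W : Set (Finset E3)}
  {t t' a a' b : E3} {F : Finset E3} (h : SharedTriangle L m S Z t t' T W a a' b)
include h

theorem symm : SharedTriangle L m T W a a' S Z t t' b :=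
  ⟨h.right, h.left, h.right_edge, h.left_edge⟩

theorem singleton_pole_mem : {a} ∈ Z := h.left.singleton_mem_base h.left_edge (by simp)

theorem singleton_mem : {b} ∈ Z := h.left.singleton_mem_base h.left_edge (by simp)

theorem rightAdj : RightAdj L m t b := h.left.rightAdj h.singleton_mem

theorem poles_notMem_faces (hL : IsSphericalRAFlag L m) : {t, t'} ∉ L.faces :=
  h.left.pair_notMem_faces hL h.symm.rightAdj.1 h.left_edge

theorem eq_or_eq_or_eq_of_mem_base (hL : IsSphericalRAFlag L m) {c d : E3} (hc : {c} ∈ Z)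
    (hca : c ≠ a) (hcb : c ≠ b) (hd : {d} ∈ W) (hdt : d ≠ t) (hdb : d ≠ b) :
    c = a' ∨ d = t' ∨ c = d := by
  by_contra! hne
  obtain ⟨hca', hdt', hcd⟩ := hne
  have tt' := h.left.tne
  have aa' := h.right.tne
  have ta := h.left.rightAdj h.singleton_pole_mem
  have tb := h.rightAdj
  have ab := h.symm.rightAdj
  have tc := h.left.rightAdj hc
  have ad := h.right.rightAdj hd
  have at' := hL.rightAdj_comm.1 (h.left.swap.rightAdj h.singleton_pole_mem)
  have bt' := hL.rightAdj_comm.1 (h.left.swap.rightAdj h.singleton_mem)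
  have ct' := hL.rightAdj_comm.1 (h.left.swap.rightAdj hc)
  have ta' := hL.rightAdj_comm.1 (h.right.swap.rightAdj h.symm.singleton_pole_mem)
  have ba' := hL.rightAdj_comm.1 (h.right.swap.rightAdj h.symm.singleton_mem)
  have da' := hL.rightAdj_comm.1 (h.right.swap.rightAdj hd)
  have t'a' : t' ≠ a' := by
    rintro rfl
    exact h.poles_notMem_faces hL ta'.2.1
  refine hL.embeds.not_two_subdivided_tripods (a := t) (b := a) (y := t') (z := a') ?_
    (h.left.subset (h.left.insert_mem h.left_edge)) tc.2.1 ct'.2.1 at'.2.1 bt'.2.1 ta'.2.1 ad.2.1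
    da'.2.1 ba'.2.1
  simp [tt', aa', ta.1, tb.1, ab.1, tc.1, ad.1, at'.1, bt'.1, ct'.1.symm, ta'.1, ba'.1, da'.1.symm,
    t'a', hca.symm, hcb.symm, hdt.symm, hdb.symm, hca'.symm, hdt'.symm, hcd]

theorem singleton_opposite_pole_mem (hL : IsSphericalRAFlag L m) (ha' : {a'} ∈ Z) : {t'} ∈ W :=
  h.right.singleton_mem_base_of_rightAdj
    (hL.rightAdj_comm.1 (h.left.swap.rightAdj h.singleton_pole_mem))
    (hL.rightAdj_comm.1 (h.left.swap.rightAdj ha'))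

theorem eq_of_singleton_mem_or_eq (hL : IsSphericalRAFlag L m) (ht' : {t'} ∈ W)
    (vertices : ∀ c, {c} ∈ Z → c = a ∨ c = a' ∨ {c} ∈ W) : S = T := by
  refine h.left.eq_of_forall_singleton_mem h.right (h.symm.poles_notMem_faces hL) fun v hv => ?_
  rw [h.right.singleton_mem_iff]
  rcases h.left.singleton_mem_iff.1 hv with rfl | rfl | hv
  exacts [.inr (.inr h.symm.singleton_pole_mem), .inr (.inr ht'), vertices v hv]

theorem eq_of_opposite_pole_mem (hL : IsSphericalRAFlag L m) (ha' : {a'} ∈ Z) : S = T := by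
  have ht' := h.singleton_opposite_pole_mem hL ha'
  by_cases hd : ∃ d, {d} ∈ W ∧ d ≠ t ∧ d ≠ b ∧ d ≠ t'
  · obtain ⟨d, hd, hdt, hdb, hdt'⟩ := hd
    refine h.eq_of_singleton_mem_or_eq hL ht' fun c hc => ?_
    obtain rfl | hca := eq_or_ne c a
    · exact .inl rfl
    obtain rfl | hcb := eq_or_ne c b
    · exact .inr (.inr h.symm.singleton_mem)
    rcases h.eq_or_eq_or_eq_of_mem_base hL hc hca hcb hd hdt hdb with hc | hd_eq | rfl
    exacts [.inr (.inl hc), absurd hd_eq hdt', .inr (.inr hd)]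
  · push Not at hd
    refine (h.symm.eq_of_singleton_mem_or_eq hL ha' fun d hd_mem => ?_).symm
    obtain rfl | hdt := eq_or_ne d t
    · exact .inl rfl
    obtain rfl | hdb := eq_or_ne d b
    exacts [.inr (.inr h.singleton_mem), .inr (.inl (hd d hd_mem hdt hdb))]

theorem pair_notMem_faces (hL : IsSphericalRAFlag L m) {e : E3} (he : {e} ∈ Z) (he' : {e} ∈ W)
    (heb : e ≠ b) : {b, e} ∉ L.faces := by
  intro face
  have edge : {b, e} ∈ Z := h.left.full.2 _ face fun v hv => by
    obtain rfl | rfl : v = b ∨ v = e := by simpa using hv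
    exacts [h.singleton_mem, he]
  have e_ne (s s') (h : IsInfMaxRASuspData L m T W s s') : s ≠ e := (h.rightAdj he').1
  have face_pole (s s') (h' : IsInfMaxRASuspData L m T W s s') :
      (s ≠ t ∧ s ≠ b) ∧ {s, t, b} ∈ L.faces :=
    ⟨by simpa using h'.t_notin _ h.right_edge, h'.subset (h'.insert_mem h.right_edge)⟩
  have face_e : {e, t, b} ∈ L.faces := by
    rw [Finset.insert_comm, Finset.pair_comm]
    exact h.left.subset (h.left.insert_mem edge)
  refine hL.embeds.not_three_triangles h.rightAdj.1 (injective_vecCons_three h.right.tne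
    (e_ne _ _ h.right) (e_ne _ _ h.right.swap)) ?_ ?_
  · simp [Fin.forall_fin_succ, face_pole _ _ h.right, face_pole _ _ h.right.swap, heb,
      (h.left.rightAdj he).1.symm]
  · simp [Fin.forall_fin_succ, face_pole _ _ h.right, face_pole _ _ h.right.swap, face_e]

theorem mem_raLink_inter (hL : IsSphericalRAFlag L m) {e : E3} (he : {e} ∈ Z) (he' : {e} ∈ W)
    {s s' : E3} (h' : IsInfMaxRASuspData L m S Z s s') :
    {s, a} ∈ raLink L m b ∩ raLink L m e :=
  ⟨h'.pair_mem_raLink hL h.singleton_mem h.singleton_pole_mem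
    (hL.rightAdj_comm.1 h.symm.rightAdj), h'.pair_mem_raLink hL he h.singleton_pole_mem
    (hL.rightAdj_comm.1 (h.right.rightAdj he'))⟩

theorem sdiff_subset_pair {e : E3} (vertices : ∀ c, {c} ∈ Z → c = a ∨ c = b ∨ c = e) (hF : F ∈ S) :
    F \ {b, e} ⊆ {t, a} ∨ F \ {b, e} ⊆ {t', a} := by
  have vertex (v) (hv : v ∈ F) (hvb : v ≠ b) (hve : v ≠ e) : v = t ∨ v = t' ∨ v = a := by
    rcases h.left.singleton_mem_iff.1 (h.left.singleton_mem_of_mem hF hv) with hv | hv | hv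
    exacts [.inl hv, .inr (.inl hv), .inr (.inr (by simpa [hvb, hve] using vertices v hv))]
  have not_both := (h.left.mem_iff.1 hF).2.1
  simp only [Finset.subset_iff, Finset.mem_sdiff, Finset.mem_insert, Finset.mem_singleton]
  by_cases ht : t ∈ F
  · exact .inl fun v ⟨hv, hv'⟩ => by
      rcases vertex v hv (by tauto) (by tauto) with hv' | rfl | hv'
      exacts [.inl hv', absurd ⟨ht, hv⟩ not_both, .inr hv']
  · exact .inr fun v ⟨hv, hv'⟩ => by
      rcases vertex v hv (by tauto) (by tauto) with rfl | hv' | hv'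
      exacts [absurd hv ht, .inl hv', .inr hv']

theorem eq_raSusp (hL : IsSphericalRAFlag L m) {e : E3} (he : {e} ∈ Z) (he' : {e} ∈ W)
    (heb : e ≠ b) (vertices : ∀ c, {c} ∈ Z → c = a ∨ c = b ∨ c = e) : S = raSusp L m b e := by
  have mem_left := h.mem_raLink_inter hL he he' h.left
  have mem_right := h.mem_raLink_inter hL he he' h.left.swap
  have data := isRASuspData_raSusp heb.symm ⟨_, mem_left⟩
  refine h.left.maximal _ ⟨_, b, e, data⟩ fun F hF => data.mem_iff.2
    ⟨L.nonempty_of_mem_faces (h.left.subset hF), fun ⟨hbF, heF⟩ => h.pair_notMem_faces hL he he' heb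
      (L.down_closed (h.left.subset hF) (by simp [Finset.insert_subset_iff, hbF, heF]) (by simp)),
      (F \ {b, e}).eq_empty_or_nonempty.imp_right fun nonempty => ?_⟩
  rcases h.sdiff_subset_pair vertices hF with sub | sub
  exacts [⟨mem_of_mem_raLink mem_left.1 sub nonempty, mem_of_mem_raLink mem_left.2 sub nonempty⟩,
    ⟨mem_of_mem_raLink mem_right.1 sub nonempty, mem_of_mem_raLink mem_right.2 sub nonempty⟩]

theorem eq_or_eq_or_eq_of_opposite_poles_notMem (hL : IsSphericalRAFlag L m)
    (ha' : {a'} ∉ Z) (ht' : {t'} ∉ W) {e : E3} (he : {e} ∈ W) (het : e ≠ t) (heb : e ≠ b) {c : E3}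
    (hc : {c} ∈ Z) : c = a ∨ c = b ∨ c = e := by
  by_contra! hne
  rcases h.eq_or_eq_or_eq_of_mem_base hL hc hne.1 hne.2.1 he het heb with rfl | rfl | hce
  exacts [ha' hc, ht' he, hne.2.2 hce]

theorem eq (hL : IsSphericalRAFlag L m) : S = T := by
  by_cases ha' : {a'} ∈ Z
  · exact h.eq_of_opposite_pole_mem hL ha'
  by_cases ht' : {t'} ∈ W
  · exact (h.symm.eq_of_opposite_pole_mem hL ht').symm
  obtain ⟨e, he', het, heb⟩ := h.right.exists_singleton_mem_base_ne h.rightAdj.1 h.right_edge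
  obtain ⟨c, hc, hca, hcb⟩ :=
    h.left.exists_singleton_mem_base_ne h.symm.rightAdj.1 h.left_edge
  have base_Z (v) (hv : {v} ∈ Z) :=
    h.eq_or_eq_or_eq_of_opposite_poles_notMem hL ha' ht' he' het heb hv
  obtain rfl : c = e := by simpa [hca, hcb] using base_Z c hc
  have base_W (v) (hv : {v} ∈ W) :=
    h.symm.eq_or_eq_or_eq_of_opposite_poles_notMem hL ht' ha' hc hca hcb hv
  rw [h.eq_raSusp hL hc he' heb base_Z, h.symm.eq_raSusp hL he' hc heb base_W]

end SharedTriangle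

end SharedTriangles

end CoxOrb

theorem infMaxRASusps_no_common_two_simplex_general
    {L : SimplicialComplex ℝ E3} {m : E3 → E3 → ℕ} (hL : IsSphericalRAFlag L m)
    {S T : Set (Finset E3)} (hS : IsInfMaxRASusp L m S) (hT : IsInfMaxRASusp L m T)
    (hne : S ≠ T) {F : Finset E3} (hF : F.card = 3) : ¬ (F ∈ S ∧ F ∈ T) := by
  rintro ⟨hFS, hFT⟩
  obtain ⟨_, _, _, hS⟩ := hS.exists_data
  obtain ⟨_, _, _, hT⟩ := hT.exists_data
  obtain ⟨t, t', G, hS, hG, G_card, rfl⟩ := hS.exists_insert_pair hL hFS hF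
  obtain ⟨u, u', H, hT, hH, -, F_eq⟩ := hT.exists_insert_pair hL hFT hF
  have ht := hS.t_notin G hG
  have hu := hT.t_notin H hH
  obtain rfl | htu := eq_or_ne t u
  · obtain rfl : G = H := by rw [← Finset.erase_insert ht, F_eq, Finset.erase_insert hu]
    obtain ⟨a, b, hab, rfl⟩ := Finset.card_eq_two.1 G_card
    exact hne (hS.eq_of_common_pole hL hT hab hG hH)
  · obtain ⟨b, rfl, rfl⟩ := exists_eq_pair_of_insert_eq_insert htu hu G_card F_eq
    exact hne (SharedTriangle.eq ⟨hS, hT, hG, hH⟩ hL)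

/-- Two distinct infinite, maximal RA-suspensions in a metric flag labeled
triangulation of the 2-sphere contain no common 2-simplex of `L`. -/
theorem infMaxRASusps_no_common_two_simplex
    (L : SimplicialComplex ℝ E3) (m : E3 → E3 → ℕ)
    (hL : IsLabeledS2 L m) (hflag : MetricFlag L m)
    (S T : Set (Finset E3)) (hS : IsInfMaxRASusp L m S) (hT : IsInfMaxRASusp L m T)
    (hne : S ≠ T) :
    ∀ F ∈ L.faces, F.card = 3 → ¬ (F ∈ S ∧ F ∈ T) :=
  fun _ _ hF => infMaxRASusps_no_common_two_simplex_general (hL.isSphericalRAFlag hflag) hS hT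
    hne hF
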